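/- Let $\mathcal{C}$ be an abelian category with enough injectives and $X$ an exact, locally nilpotent endofunctor preserving injectives. Let $g\colon \mathsf{M} \to f_!(I)$ be a morphism in $\operatorname{Mono}(X)$ with $I$ injective in $\mathcal{C}$. Then $g$ is an injective envelope in the exact category $\operatorname{Mono}(X)$ if and only if $\operatorname{Kopf}_X(g)\colon \operatorname{Kopf}_X(\mathsf{M}) \to I$ is an injective envelope in $\mathcal{C}$. Consequently, if $\mathcal{C}$ has injective envelopes, so does $\operatorname{Mono}(X)$. -/

import Mathlib

/-!
For `M` in `Mono(X)` and a module `P` with injective carrier, the obstruction map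
`f ↦ h_M ≫ f - X(f) ≫ h_P` is surjective: a given `v : X M ⟶ P` extends along the monomorphism
`h_M` to some `u : M ⟶ P`, which has obstruction `v - X(u) ≫ h_P`, and after finitely many
repetitions the error term factors through a zero object. Consequently `P` is injective with
respect to inflations, and every morphism `Kopf_X M ⟶ Kopf_X F` with `F` in `Mono(X)` of injective
carrier lifts to `M ⟶ F`; the lift can be prescribed on a submodule whose inclusion is an
inflation, because the difference of two candidates takes values in the submodule `X F`, whose
carrier is again injective.

Nilpotency also gives Nakayama's lemma: `Kopf_X` reflects monomorphisms, epimorphisms and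
isomorphisms, and by the snake lemma the inflations are exactly the morphisms that `Kopf_X` sends
to monomorphisms. Left minimality of `g` and of `Kopf_X g` are then equivalent, since
endomorphisms under `Kopf_X M` lift to endomorphisms under `M` and isomorphisms are preserved and
reflected.
-/

open CategoryTheory Limits

universe v u

variable {C : Type u} [Category.{v} C]

/-- The power `X^n` of an endofunctor, with `X^(n+1) = X^n ⋙ X`. -/
def fpow (X : C ⥤ C) : ℕ → (C ⥤ C)
  | 0 => 𝟭 C
  | n + 1 => fpow X n ⋙ X

/-- `X` is locally nilpotent if every object is annihilated by some power of `X`. -/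
def LocallyNilpotent (X : C ⥤ C) : Prop :=
  ∀ M : C, ∃ n : ℕ, IsZero ((fpow X n).obj M)

/-- The category `(X ⇓ Id)` of `X`-modules, identified with the Eilenberg–Moore category
of the free monad on `X`. -/
structure XMod (X : C ⥤ C) : Type max u v where
  carrier : C
  str : X.obj carrier ⟶ carrier

/-- Morphisms of `X`-modules. -/
@[ext]
structure XModHom {X : C ⥤ C} (M N : XMod X) : Type v where
  hom : M.carrier ⟶ N.carrier
  comm : M.str ≫ hom = X.map hom ≫ N.str

instance (X : C ⥤ C) : Category (XMod X) where
  Hom := XModHom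
  id M := ⟨𝟙 M.carrier, by simp⟩
  comp f g := ⟨f.hom ≫ g.hom, by
    rw [← Category.assoc, f.comm, Category.assoc, g.comm, ← Category.assoc, ← Functor.map_comp]⟩
  id_comp f := by apply XModHom.ext; simp [CategoryStruct.id, CategoryStruct.comp]
  comp_id f := by apply XModHom.ext; simp [CategoryStruct.id, CategoryStruct.comp]
  assoc f g h := by apply XModHom.ext; simp [CategoryStruct.comp]

@[simp] lemma XMod.id_hom {X : C ⥤ C} (M : XMod X) : (𝟙 M : XModHom M M).hom = 𝟙 M.carrier := rfl
@[simp] lemma XMod.comp_hom {X : C ⥤ C} {M N P : XMod X} (f : M ⟶ N) (g : N ⟶ P) :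
    (f ≫ g).hom = f.hom ≫ g.hom := rfl

/-- `F` is the free `X`-module `f₁(N)` on `N`, encoded via the universal
property of the free–forgetful adjunction `f₁ ⊣ f⋆`. -/
structure IsFreeXModOn (X : C ⥤ C) (F : XMod X) (N : C) where
  unit : N ⟶ F.carrier
  lift : ∀ (P : XMod X), (N ⟶ P.carrier) → (F ⟶ P)
  fac : ∀ (P : XMod X) (g : N ⟶ P.carrier), unit ≫ (lift P g).hom = g
  uniq : ∀ (P : XMod X) (g : N ⟶ P.carrier) (k : F ⟶ P), unit ≫ k.hom = g → k = lift P g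

variable [Abelian C] {X : C ⥤ C}

/-- A conflation in `Mono(X)`: a kernel-cokernel pair (detected on underlying objects). -/
def IsConf {A B D : XMod X} (f : A ⟶ B) (g : B ⟶ D) : Prop :=
  Mono f.hom ∧ Epi g.hom ∧
    ∃ w : f.hom ≫ g.hom = 0, (ShortComplex.mk f.hom g.hom w).Exact

/-- An inflation in the exact category `Mono(X)`: a monomorphism whose cokernel again lies
in `Mono(X)`. -/
def IsInflationMono {A B : XMod X} (f : A ⟶ B) : Prop :=
  ∃ (D : XMod X) (g : B ⟶ D), Mono D.str ∧ IsConf f g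

/-- The induced map `Kopf_X(g) : coker h_M ⟶ coker h_N` on tops. -/
noncomputable def kopfMap {M N : XMod X} (g : M ⟶ N) :
    cokernel M.str ⟶ cokernel N.str :=
  cokernel.map M.str N.str (X.map g.hom) g.hom g.comm

/-- Left minimality, the condition that makes an inflation into an injective object an injective
envelope. It is stated for an arbitrary category, as it is needed both in `C` and in `XMod X`. -/
def LeftMinimal {D : Type*} [Category* D] {A B : D} (f : A ⟶ B) : Prop :=
  ∀ φ : B ⟶ B, f ≫ φ = f → IsIso φ

lemma LeftMinimal.comp_iso {D : Type*} [Category* D] {A B B' : D} {f : A ⟶ B}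
    (hf : LeftMinimal f) (e : B ≅ B') : LeftMinimal (f ≫ e.hom) := by
  intro φ hφ
  have : IsIso (e.hom ≫ φ ≫ e.inv) := hf _ (by
    rw [← Category.assoc, ← Category.assoc, hφ, Category.assoc, e.hom_inv_id, Category.comp_id])
  simpa using this

section AbelianCategory

lemma additive_of_preservesFiniteColimits {D : Type*} [Category* D] [Abelian D] (F : C ⥤ D)
    [PreservesFiniteColimits F] : F.Additive :=
  have := preservesBinaryBiproducts_of_preservesBinaryCoproducts F
  Functor.additive_of_preservesBinaryBiproducts F

lemma exists_comp_cokernel_π_eq_id {A B : C} (i : A ⟶ B) [Mono i] [Injective A] :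
    ∃ σ : cokernel i ⟶ B, σ ≫ cokernel.π i = 𝟙 _ :=
  have h : (ShortComplex.mk i (cokernel.π i) (by simp)).ShortExact :=
    { exact := ShortComplex.exact_cokernel i
      epi_g := inferInstanceAs (Epi (cokernel.π i)) }
  ⟨h.splittingOfInjective.s, h.splittingOfInjective.s_g⟩

lemma isIso_comp_cokernel_π_of_isIso_biprod_desc {A B Y : C} (u : A ⟶ Y) (f : B ⟶ Y)
    [IsIso (biprod.desc u f)] : IsIso (u ≫ cokernel.π f) := by
  let p : Y ⟶ A := inv (biprod.desc u f) ≫ biprod.fst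
  have desc_p : biprod.desc u f ≫ p = biprod.fst := by simp [p]
  have u_p : u ≫ p = 𝟙 A := by simpa using biprod.inl ≫= desc_p
  have f_p : f ≫ p = 0 := by simpa using biprod.inr ≫= desc_p
  refine ⟨cokernel.desc f p f_p, by simp [u_p], ?_⟩
  rw [← cancel_epi (cokernel.π f), ← cancel_epi (biprod.desc u f)]
  ext <;> simp [reassoc_of% u_p, reassoc_of% f_p]

lemma mono_cokernel_map_of_mono_τ₃ {S T : ShortComplex C} (v : S ⟶ T) (hS : S.Exact)
    [Mono T.f] [Mono v.τ₂] [Mono v.τ₃] :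
    Mono (cokernel.map v.τ₁ v.τ₂ S.f T.f v.comm₁₂) := by
  refine Preadditive.mono_of_cancel_zero _ fun {A} t ht => ?_
  obtain ⟨A₁, p₁, _, y, hy⟩ := surjective_up_to_refinements_of_epi (cokernel.π v.τ₁) t
  have hyf : (y ≫ T.f) ≫ cokernel.π v.τ₂ = 0 := by
    simpa [ht] using (hy =≫ cokernel.map v.τ₁ v.τ₂ S.f T.f v.comm₁₂).symm
  obtain ⟨x, hx : x ≫ v.τ₂ = y ≫ T.f⟩ := (ShortComplex.exact_cokernel v.τ₂).lift' _ hyf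
  have hxg : x ≫ S.g = 0 := by
    rw [← cancel_mono v.τ₃, Category.assoc, ← v.comm₂₃, reassoc_of% hx, T.zero, comp_zero,
      zero_comp]
  obtain ⟨A₂, p₂, _, z, hz⟩ := hS.exact_up_to_refinements x hxg
  have hzy : p₂ ≫ y = z ≫ v.τ₁ := by
    rw [← cancel_mono T.f, Category.assoc, ← hx, reassoc_of% hz, Category.assoc, v.comm₁₂]
  rw [← cancel_epi p₁, ← cancel_epi p₂, hy, reassoc_of% hzy]
  simp

lemma mono_τ₃_of_mono_cokernel_map {S T : ShortComplex C} (v : S ⟶ T) [Epi S.g] (hT : T.Exact)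
    [Mono T.f] [Mono v.τ₂] [Mono (cokernel.map v.τ₁ v.τ₂ S.f T.f v.comm₁₂)] : Mono v.τ₃ := by
  refine Preadditive.mono_of_cancel_zero _ fun {A} t ht => ?_
  obtain ⟨A₁, p₁, _, x, hx⟩ := surjective_up_to_refinements_of_epi S.g t
  have hxg : (x ≫ v.τ₂) ≫ T.g = 0 := by
    rw [Category.assoc, v.comm₂₃, ← reassoc_of% hx, ht, comp_zero]
  obtain ⟨y, hy⟩ := hT.lift' _ hxg
  have hyπ : y ≫ cokernel.π v.τ₁ = 0 := by
    rw [← cancel_mono (cokernel.map v.τ₁ v.τ₂ S.f T.f v.comm₁₂)]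
    simp [reassoc_of% hy]
  obtain ⟨A₂, p₂, _, z, hz : p₂ ≫ y = z ≫ v.τ₁⟩ :=
    (ShortComplex.exact_cokernel v.τ₁).exact_up_to_refinements y hyπ
  have hzx : p₂ ≫ x = z ≫ S.f := by
    rw [← cancel_mono v.τ₂, Category.assoc, ← hy, reassoc_of% hz, Category.assoc, v.comm₁₂]
  rw [← cancel_epi p₁, ← cancel_epi p₂, hx, reassoc_of% hzx]
  simp

end AbelianCategory

namespace LocallyNilpotent

omit [Abelian C] in
@[elab_as_elim]
lemma induction (hX : LocallyNilpotent X) {p : C → Prop} (isZero : ∀ Y, IsZero Y → p Y)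
    (step : ∀ Y, p (X.obj Y) → p Y) (Y : C) : p Y := by
  obtain ⟨n, hn⟩ := hX Y
  have h : p ((fpow X n).obj Y) := isZero _ hn
  clear hn
  induction n with
  | zero => exact h
  | succ n ih => exact ih (step _ h)

lemma isZero_of_mono [X.PreservesMonomorphisms] (hX : LocallyNilpotent X) {K : C}
    (m : K ⟶ X.obj K) [Mono m] : IsZero K := by
  induction K using hX.induction with
  | isZero K hK => exact hK
  | step K ih => exact IsZero.of_mono m (ih (X.map m))

lemma isZero_of_epi [X.PreservesEpimorphisms] (hX : LocallyNilpotent X) {K : C}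
    (m : X.obj K ⟶ K) [Epi m] : IsZero K := by
  induction K using hX.induction with
  | isZero K hK => exact hK
  | step K ih => exact IsZero.of_epi m (ih (X.map m))

lemma injective_of_iso_biprod [X.Additive] [X.PreservesInjectiveObjects]
    (hX : LocallyNilpotent X) {Y I : C} [Injective I] (e : Y ≅ I ⊞ X.obj Y) : Injective Y := by
  induction Y using hX.induction generalizing I with
  | isZero Y hY => exact hY.injective
  | step Y ih =>
    have := preservesBinaryBiproducts_of_preservesBiproducts X
    have : Injective (X.obj Y) := ih (X.mapIso e ≪≫ X.mapBiprod I (X.obj Y))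
    exact Injective.of_iso e.symm inferInstance

end LocallyNilpotent

section Kopf

omit [Abelian C] in
lemma XMod.isIso_of_isIso_hom {M N : XMod X} (g : M ⟶ N) [IsIso g.hom] : IsIso g :=
  ⟨⟨inv g.hom, by rw [← cancel_epi (X.map g.hom), ← reassoc_of% g.comm]; simp⟩,
    XModHom.ext (IsIso.hom_inv_id g.hom), XModHom.ext (IsIso.inv_hom_id g.hom)⟩

@[simp]
lemma π_kopfMap {M N : XMod X} (g : M ⟶ N) :
    cokernel.π M.str ≫ kopfMap g = g.hom ≫ cokernel.π N.str :=
  cokernel.π_desc _ _ _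

variable (X) in
/-- `Kopf_X` as a functor on all `X`-modules. -/
noncomputable def kopf : XMod X ⥤ C where
  obj M := cokernel M.str
  map := kopfMap
  map_id M := by rw [← cancel_epi (cokernel.π M.str)]; simp
  map_comp f g := by rw [← cancel_epi (cokernel.π _)]; simp [reassoc_of% π_kopfMap f]

lemma kopfMap_comp {M N P : XMod X} (f : M ⟶ N) (g : N ⟶ P) :
    kopfMap (f ≫ g) = kopfMap f ≫ kopfMap g :=
  (kopf X).map_comp f g

instance {M N : XMod X} (g : M ⟶ N) [IsIso g] : IsIso (kopfMap g) :=
  inferInstanceAs (IsIso ((kopf X).map g))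

end Kopf

section Cokernel

variable [PreservesFiniteColimits X]

attribute [local instance] additive_of_preservesFiniteColimits

/-- The cokernel of a morphism of `X`-modules, with the cokernel in `C` as carrier. -/
noncomputable def XMod.coker {M N : XMod X} (g : M ⟶ N) : XMod X where
  carrier := cokernel g.hom
  str := (PreservesCokernel.iso X g.hom).hom ≫
    cokernel.map (X.map g.hom) g.hom M.str N.str g.comm.symm

/-- The projection onto the cokernel `XMod.coker g`. -/
noncomputable def XMod.cokerπ {M N : XMod X} (g : M ⟶ N) : N ⟶ XMod.coker g where
  hom := cokernel.π g.hom
  comm := by simp [XMod.coker]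

instance {M N : XMod X} (g : M ⟶ N) : Epi (XMod.cokerπ g).hom :=
  inferInstanceAs (Epi (cokernel.π g.hom))

@[simp]
lemma XMod.hom_comp_cokerπ_hom {M N : XMod X} (g : M ⟶ N) : g.hom ≫ (XMod.cokerπ g).hom = 0 :=
  cokernel.condition g.hom

lemma XMod.isConf_cokerπ {M N : XMod X} (g : M ⟶ N) [Mono g.hom] :
    IsConf g (XMod.cokerπ g) :=
  ⟨inferInstance, inferInstance, XMod.hom_comp_cokerπ_hom g, ShortComplex.exact_cokernel g.hom⟩

lemma IsConf.map_exact {M N D : XMod X} {g : M ⟶ N} {q : N ⟶ D} (h : IsConf g q) :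
    ∃ w, (ShortComplex.mk (X.map g.hom) (X.map q.hom) w).Exact := by
  obtain ⟨-, hq, w, hex⟩ := h
  exact ⟨_, hex.map_of_epi_of_preservesCokernel X hq inferInstance⟩

lemma IsConf.exists_map_comp_eq {M N D : XMod X} {g : M ⟶ N} {q : N ⟶ D} (h : IsConf g q)
    {Y : C} (v : X.obj N.carrier ⟶ Y) (hv : X.map g.hom ≫ v = 0) :
    ∃ w, X.map q.hom ≫ w = v := by
  obtain ⟨_, hex⟩ := h.map_exact
  have := h.2.1
  exact hex.desc' v hv

lemma IsConf.mono_str_iff_mono_kopfMap {M N D : XMod X} {g : M ⟶ N} {q : N ⟶ D}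
    (h : IsConf g q) [Mono N.str] : Mono D.str ↔ Mono (kopfMap g) := by
  obtain ⟨_, hex_map⟩ := h.map_exact
  obtain ⟨_, _, w, hex⟩ := h
  let v : ShortComplex.mk (X.map g.hom) (X.map q.hom) ‹_› ⟶ ShortComplex.mk g.hom q.hom w :=
    { τ₁ := M.str, τ₂ := N.str, τ₃ := D.str, comm₁₂ := g.comm, comm₂₃ := q.comm }
  have : Mono v.τ₂ := ‹Mono N.str›
  constructor <;> intro hmono
  · have : Mono v.τ₃ := hmono
    exact mono_cokernel_map_of_mono_τ₃ v hex_map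
  · have : Mono (cokernel.map v.τ₁ v.τ₂ _ _ v.comm₁₂) := hmono
    have : Epi (X.map q.hom) := inferInstance
    exact mono_τ₃_of_mono_cokernel_map v hex

lemma XMod.epi_str_coker_of_epi_kopfMap {M N : XMod X} (g : M ⟶ N) [Epi (kopfMap g)] :
    Epi (XMod.coker g).str := by
  refine Preadditive.epi_of_cancel_zero _ fun {T} t ht => ?_
  have hN : N.str ≫ (XMod.cokerπ g).hom ≫ t = 0 := by
    rw [← Category.assoc, (XMod.cokerπ g).comm, Category.assoc, ht, comp_zero]
  have hdesc : cokernel.desc N.str _ hN = 0 := by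
    rw [← cancel_epi (kopfMap g), ← cancel_epi (cokernel.π M.str), reassoc_of% π_kopfMap g,
      cokernel.π_desc, ← Category.assoc, XMod.hom_comp_cokerπ_hom, zero_comp, comp_zero, comp_zero]
  rw [← cancel_epi (XMod.cokerπ g).hom, comp_zero]
  simpa [hdesc] using (cokernel.π_desc N.str _ hN).symm

lemma XMod.epi_hom_of_epi_kopfMap (hX : LocallyNilpotent X) {M N : XMod X} (g : M ⟶ N)
    [Epi (kopfMap g)] : Epi g.hom := by
  have := XMod.epi_str_coker_of_epi_kopfMap g
  have hzero : IsZero (XMod.coker g).carrier := hX.isZero_of_epi (XMod.coker g).str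
  exact Preadditive.epi_of_isZero_cokernel _ hzero

end Cokernel

section Exact

variable [PreservesFiniteLimits X]

lemma XMod.mono_hom_of_mono_kopfMap (hX : LocallyNilpotent X) {M N : XMod X} [Mono M.str]
    [Mono N.str] (g : M ⟶ N) [Mono (kopfMap g)] : Mono g.hom := by
  have kernel_radical : kernel.ι g.hom ≫ cokernel.π M.str = 0 := by
    rw [← cancel_mono (kopfMap g)]
    simp
  obtain ⟨l, hl : l ≫ M.str = kernel.ι g.hom⟩ :=
    (ShortComplex.exact_cokernel M.str).lift' _ kernel_radical
  have hlg : l ≫ X.map g.hom = 0 := by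
    rw [← cancel_mono N.str, Category.assoc, ← g.comm, reassoc_of% hl, kernel.condition, zero_comp]
  have hex : (ShortComplex.mk (X.map (kernel.ι g.hom)) (X.map g.hom) _).Exact :=
    (ShortComplex.exact_kernel g.hom).map_of_mono_of_preservesKernel X
      inferInstance inferInstance
  obtain ⟨m, hm : m ≫ X.map (kernel.ι g.hom) = l⟩ := hex.lift' l hlg
  have : Mono m := by
    have : m ≫ X.map (kernel.ι g.hom) ≫ M.str = kernel.ι g.hom := by rw [reassoc_of% hm, hl]
    exact mono_of_mono_fac this
  exact Preadditive.mono_of_isZero_kernel _ (hX.isZero_of_mono m)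

variable [PreservesFiniteColimits X]

lemma isInflationMono_iff_mono_kopfMap (hX : LocallyNilpotent X) {M N : XMod X} [Mono M.str]
    [Mono N.str] (g : M ⟶ N) : IsInflationMono g ↔ Mono (kopfMap g) := by
  constructor
  · rintro ⟨D, q, hD, h⟩
    exact h.mono_str_iff_mono_kopfMap.1 hD
  · intro _
    have := XMod.mono_hom_of_mono_kopfMap hX g
    have h := XMod.isConf_cokerπ g
    exact ⟨_, _, h.mono_str_iff_mono_kopfMap.2 inferInstance, h⟩

lemma XMod.isIso_of_isIso_kopfMap (hX : LocallyNilpotent X) {M N : XMod X} [Mono M.str] [Mono N.str]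
    (g : M ⟶ N) [IsIso (kopfMap g)] : IsIso g := by
  have := XMod.mono_hom_of_mono_kopfMap hX g
  have := XMod.epi_hom_of_epi_kopfMap hX g
  have : IsIso g.hom := isIso_of_mono_of_epi _
  exact XMod.isIso_of_isIso_hom g

end Exact

section Radical

/-- The `X`-module on `X.obj F.carrier`. For `F` in `Mono(X)` it is the submodule of `F` with
quotient `Kopf_X(F)`. -/
def XMod.rad (F : XMod X) : XMod X where
  carrier := X.obj F.carrier
  str := X.map F.str

/-- The structure map of `F` as a morphism of `X`-modules. -/
def XMod.radι (F : XMod X) : F.rad ⟶ F where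
  hom := F.str
  comm := rfl

instance [X.PreservesInjectiveObjects] (F : XMod X) [Injective F.carrier] :
    Injective F.rad.carrier :=
  inferInstanceAs (Injective (X.obj F.carrier))

instance (F : XMod X) [Mono F.str] : Mono F.radι.hom :=
  inferInstanceAs (Mono F.str)

@[simp]
lemma XMod.radι_hom_comp_π (F : XMod X) : F.radι.hom ≫ cokernel.π F.str = 0 :=
  cokernel.condition F.str

end Radical

section Defect

variable [X.Additive]

/-- The failure of a morphism `f` of carriers to be a morphism of `X`-modules. The kernel of
`XMod.defect M N` is `Hom(M, N)` and its cokernel classifies the extensions of `M` by `N` that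
split in `C`. -/
def XMod.defect (M N : XMod X) :
    (M.carrier ⟶ N.carrier) →+ (X.obj M.carrier ⟶ N.carrier) where
  toFun f := M.str ≫ f - X.map f ≫ N.str
  map_zero' := by simp
  map_add' f g := by
    simp only [Preadditive.comp_add, Functor.map_add, Preadditive.add_comp]
    abel

lemma XMod.defect_apply {M N : XMod X} (f : M.carrier ⟶ N.carrier) :
    XMod.defect M N f = M.str ≫ f - X.map f ≫ N.str := rfl

@[simp]
lemma XMod.defect_hom {M N : XMod X} (f : M ⟶ N) : XMod.defect M N f.hom = 0 :=
  sub_eq_zero.2 f.comm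

lemma XMod.defect_hom_comp {L M N : XMod X} (g : L ⟶ M) (f : M.carrier ⟶ N.carrier) :
    XMod.defect L N (g.hom ≫ f) = X.map g.hom ≫ XMod.defect M N f := by
  simp [XMod.defect_apply, reassoc_of% g.comm]

lemma XMod.defect_comp_hom {L M N : XMod X} (f : L.carrier ⟶ M.carrier) (g : M ⟶ N) :
    XMod.defect L N (f ≫ g.hom) = XMod.defect L M f ≫ g.hom := by
  simp [XMod.defect_apply, g.comm]

/-- The morphism of `X`-modules given by a morphism of carriers with vanishing defect. -/
@[simps]
def XMod.homOfDefectEqZero {M N : XMod X} (f : M.carrier ⟶ N.carrier)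
    (hf : XMod.defect M N f = 0) : M ⟶ N where
  hom := f
  comm := sub_eq_zero.1 hf

lemma XMod.exists_comp_radι_eq_sub {M F : XMod X} [Mono F.str] {f₁ f₂ : M ⟶ F}
    (h : kopfMap f₁ = kopfMap f₂) :
    ∃ k : M ⟶ F.rad, k.hom ≫ F.radι.hom = f₁.hom - f₂.hom := by
  have hπ : (f₁.hom - f₂.hom) ≫ cokernel.π F.str = 0 := by
    rw [Preadditive.sub_comp, ← π_kopfMap, ← π_kopfMap, h, sub_self]
  obtain ⟨k : M.carrier ⟶ F.rad.carrier, hk : k ≫ F.radι.hom = f₁.hom - f₂.hom⟩ :=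
    (ShortComplex.exact_cokernel F.str).lift' _ hπ
  refine ⟨XMod.homOfDefectEqZero k ?_, hk⟩
  rw [← cancel_mono F.radι.hom, ← XMod.defect_comp_hom, hk]
  simp

lemma XMod.exists_defect_eq_comp [X.PreservesInjectiveObjects] (hX : LocallyNilpotent X)
    (M P : XMod X) [Mono M.str] {Y : C} [hY : Injective Y] (v : X.obj M.carrier ⟶ Y)
    (s : Y ⟶ P.carrier) : ∃ d, XMod.defect M P d = v ≫ s := by
  induction Y using hX.induction generalizing hY with
  | isZero Y h => exact ⟨0, by rw [h.eq_of_src s 0, map_zero, comp_zero]⟩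
  | step Y ih =>
    let u : M.carrier ⟶ Y := Injective.factorThru v M.str
    have hu : M.str ≫ u = v := Injective.comp_factorThru v M.str
    obtain ⟨d, hd⟩ := ih (X.map u) (X.map s ≫ P.str)
    refine ⟨u ≫ s + d, ?_⟩
    rw [map_add, hd, XMod.defect_apply, reassoc_of% hu, X.map_comp, Category.assoc,
      sub_add_cancel]

lemma XMod.defect_surjective [X.PreservesInjectiveObjects] (hX : LocallyNilpotent X)
    (M P : XMod X) [Mono M.str] [Injective P.carrier] :
    Function.Surjective (XMod.defect M P) := fun v => by
  simpa using XMod.exists_defect_eq_comp hX M P v (𝟙 _)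

end Defect

section Lifting

variable [PreservesFiniteColimits X] [X.PreservesInjectiveObjects]

attribute [local instance] additive_of_preservesFiniteColimits

lemma IsInflationMono.exists_comp_eq (hX : LocallyNilpotent X) {M N P : XMod X} {g : M ⟶ N}
    (hg : IsInflationMono g) [Injective P.carrier] (f : M ⟶ P) : ∃ e : N ⟶ P, g ≫ e = f := by
  obtain ⟨D, q, hD, h⟩ := hg
  have := h.1
  let e₀ : N.carrier ⟶ P.carrier := Injective.factorThru f.hom g.hom
  have he₀ : g.hom ≫ e₀ = f.hom := Injective.comp_factorThru f.hom g.hom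
  obtain ⟨v, hv⟩ := h.exists_map_comp_eq (XMod.defect N P e₀)
    (by rw [← XMod.defect_hom_comp, he₀, XMod.defect_hom])
  obtain ⟨d, hd⟩ := XMod.defect_surjective hX D P v
  refine ⟨XMod.homOfDefectEqZero (e₀ - q.hom ≫ d) ?_, XModHom.ext ?_⟩
  · rw [map_sub, XMod.defect_hom_comp, hd, hv, sub_self]
  · obtain ⟨w, -⟩ := h.2.2
    simp [he₀, reassoc_of% w]

lemma XMod.exists_kopfMap_eq (hX : LocallyNilpotent X) {M F : XMod X} [Mono M.str] [Mono F.str]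
    [Injective F.carrier] (τ : cokernel M.str ⟶ cokernel F.str) :
    ∃ e : M ⟶ F, kopfMap e = τ := by
  obtain ⟨σ, hσ⟩ := exists_comp_cokernel_π_eq_id F.str
  let e₀ : M.carrier ⟶ F.carrier := cokernel.π M.str ≫ τ ≫ σ
  have he₀ : XMod.defect M F e₀ = -(X.map e₀ ≫ F.str) := by simp [XMod.defect_apply, e₀]
  obtain ⟨d, hd⟩ := XMod.defect_surjective hX M F.rad (X.map e₀)
  refine ⟨XMod.homOfDefectEqZero (e₀ + d ≫ F.radι.hom) ?_, ?_⟩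
  · rw [map_add, XMod.defect_comp_hom, hd, he₀]
    exact neg_add_cancel _
  · rw [← cancel_epi (cokernel.π M.str)]
    simp [e₀, hσ]

lemma IsInflationMono.exists_comp_eq_and_kopfMap_eq (hX : LocallyNilpotent X) {M N F : XMod X}
    {g : M ⟶ N} (hg : IsInflationMono g) [Mono N.str] [Mono F.str] [Injective F.carrier]
    (f : M ⟶ F) (τ : cokernel N.str ⟶ cokernel F.str) (hτ : kopfMap g ≫ τ = kopfMap f) :
    ∃ e : N ⟶ F, g ≫ e = f ∧ kopfMap e = τ := by
  obtain ⟨e₁, rfl⟩ := XMod.exists_kopfMap_eq hX τ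
  rw [← kopfMap_comp] at hτ
  obtain ⟨k, hk⟩ := XMod.exists_comp_radι_eq_sub hτ
  obtain ⟨d, rfl⟩ := hg.exists_comp_eq hX k
  refine ⟨XMod.homOfDefectEqZero (e₁.hom - (d ≫ F.radι).hom) ?_, XModHom.ext ?_, ?_⟩
  · rw [map_sub, XMod.defect_hom, XMod.defect_hom, sub_self]
  · rw [XMod.comp_hom, Category.assoc, XMod.comp_hom] at hk
    simp [hk]
  · rw [← cancel_epi (cokernel.π N.str)]
    simp

lemma IsInflationMono.leftMinimal_iff_leftMinimal_kopfMap [PreservesFiniteLimits X]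
    (hX : LocallyNilpotent X) {M F : XMod X} {g : M ⟶ F} (hg : IsInflationMono g) [Mono F.str]
    [Injective F.carrier] : LeftMinimal g ↔ LeftMinimal (kopfMap g) := by
  constructor <;> intro hmin φ hφ
  · obtain ⟨e, he, rfl⟩ := hg.exists_comp_eq_and_kopfMap_eq hX g φ hφ
    have := hmin e he
    infer_instance
  · have := hmin (kopfMap φ) (by rw [← kopfMap_comp, hφ])
    exact XMod.isIso_of_isIso_kopfMap hX φ

end Lifting

section Adjoin

variable [X.Additive]

/-- The extension of an `X`-module `F` by generators `J` that `X` multiplies into `F` through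
`u : X.obj J ⟶ F.carrier`. -/
noncomputable def XMod.adjoin {F : XMod X} {J : C} (u : X.obj J ⟶ F.carrier) : XMod X where
  carrier := J ⊞ F.carrier
  str := (X.map biprod.fst ≫ u + X.map biprod.snd ≫ F.str) ≫ biprod.inr

namespace XMod.adjoin

variable {F : XMod X} {J : C} (u : X.obj J ⟶ F.carrier)

/-- The inclusion of the new generators. -/
noncomputable def inl : J ⟶ (XMod.adjoin u).carrier :=
  biprod.inl

/-- The inclusion of `F` into `XMod.adjoin u`. -/
noncomputable def inr : F ⟶ XMod.adjoin u where
  hom := biprod.inr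
  comm := by simp [XMod.adjoin, ← X.map_comp_assoc]

lemma map_inl_str : X.map (inl u) ≫ (XMod.adjoin u).str = u ≫ (inr u).hom := by
  simp [XMod.adjoin, inl, inr, ← X.map_comp_assoc]

/-- The morphism out of `XMod.adjoin u` given by a morphism on the generators `J` and a compatible
morphism of `X`-modules on `F`. -/
noncomputable def desc {P : XMod X} (a : J ⟶ P.carrier) (f : F ⟶ P)
    (h : u ≫ f.hom = X.map a ≫ P.str) : XMod.adjoin u ⟶ P where
  hom := biprod.desc a f.hom
  comm := by simp [XMod.adjoin, biprod.desc_eq, h, f.comm]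

end XMod.adjoin

end Adjoin

namespace IsFreeXModOn

omit [Abelian C] in
lemma hom_ext {F : XMod X} {I : C} (hF : IsFreeXModOn X F I) {P : XMod X} {k l : F ⟶ P}
    (h : hF.unit ≫ k.hom = hF.unit ≫ l.hom) : k = l :=
  (hF.uniq P _ k h).trans (hF.uniq P _ l rfl).symm

/-- The zero module is free on a zero object. -/
def ofIsZero [X.Additive] {J : C} (hJ : IsZero J) : IsFreeXModOn X ⟨J, 0⟩ J where
  unit := 𝟙 J
  lift P _ := ⟨0, by simp⟩
  fac _ _ := hJ.eq_of_src _ _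
  uniq _ _ _ _ := XModHom.ext (hJ.eq_of_src _ _)

/-- If `F` is free on `X.obj J`, then adjoining the generators `J` to `F` gives the free module on
`J`: this is `f₁(J) ≅ J ⊕ f₁(X J)`. -/
noncomputable def adjoin [X.Additive] {F : XMod X} {J : C} (hF : IsFreeXModOn X F (X.obj J)) :
    IsFreeXModOn X (XMod.adjoin hF.unit) J where
  unit := XMod.adjoin.inl hF.unit
  lift P a := XMod.adjoin.desc hF.unit a (hF.lift P (X.map a ≫ P.str)) (hF.fac _ _)
  fac P a := biprod.inl_desc _ _
  uniq P a k hk := by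
    refine XModHom.ext (biprod.hom_ext' _ _ (hk.trans (biprod.inl_desc _ _).symm) ?_)
    have hinr : XMod.adjoin.inr hF.unit ≫ k = hF.lift P (X.map a ≫ P.str) := hF.uniq _ _ _ (by
      rw [XMod.comp_hom, ← reassoc_of% XMod.adjoin.map_inl_str hF.unit, k.comm,
        ← X.map_comp_assoc, hk])
    exact (congrArg XModHom.hom hinr).trans (biprod.inr_desc _ _).symm

lemma exists_of_locallyNilpotent [X.Additive] (hX : LocallyNilpotent X) (J : C) :
    ∃ F : XMod X, Nonempty (IsFreeXModOn X F J) := by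
  induction J using hX.induction with
  | isZero J hJ => exact ⟨_, ⟨ofIsZero hJ⟩⟩
  | step J ih =>
    obtain ⟨F, ⟨hF⟩⟩ := ih
    exact ⟨_, ⟨hF.adjoin⟩⟩

variable {F : XMod X} {I : C} (hF : IsFreeXModOn X F I)

include hF

lemma isIso_biprod_desc : IsIso (biprod.desc hF.unit F.str) := by
  let α : I ⊞ X.obj F.carrier ⟶ F.carrier := biprod.desc hF.unit F.str
  let Q : XMod X := ⟨I ⊞ X.obj F.carrier, X.map α ≫ biprod.inr⟩
  let a : Q ⟶ F := ⟨α, by simp [Q, α]⟩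
  let b : F ⟶ Q := hF.lift Q biprod.inl
  have unit_b : hF.unit ≫ b.hom = biprod.inl := hF.fac Q biprod.inl
  have hba : b ≫ a = 𝟙 F := hF.hom_ext (by simp [reassoc_of% unit_b, a, α])
  have hbα : b.hom ≫ α = 𝟙 _ := congrArg XModHom.hom hba
  refine ⟨b.hom, biprod.hom_ext' _ _ (by simpa using unit_b) ?_, hbα⟩
  have str_b : F.str ≫ b.hom = X.map b.hom ≫ X.map α ≫ biprod.inr := b.comm
  simp [str_b, ← X.map_comp_assoc, hbα]

lemma mono_str : Mono F.str := by
  have := hF.isIso_biprod_desc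
  rw [← biprod.inr_desc hF.unit F.str]
  exact mono_comp _ _

lemma injective_carrier [X.Additive] [X.PreservesInjectiveObjects] (hX : LocallyNilpotent X)
    [Injective I] : Injective F.carrier := by
  have := hF.isIso_biprod_desc
  exact hX.injective_of_iso_biprod (asIso (biprod.desc hF.unit F.str)).symm

/-- The isomorphism `Kopf_X f₁(I) ≅ I`, read from right to left. -/
noncomputable def isoKopf : I ≅ cokernel F.str :=
  have := hF.isIso_biprod_desc
  have := isIso_comp_cokernel_π_of_isIso_biprod_desc hF.unit F.str
  asIso (hF.unit ≫ cokernel.π F.str)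

end IsFreeXModOn

section Envelopes

variable [PreservesFiniteLimits X] [PreservesFiniteColimits X] [X.PreservesInjectiveObjects]

attribute [local instance] additive_of_preservesFiniteColimits

lemma isInflationMono_and_leftMinimal_iff (hX : LocallyNilpotent X) {M F : XMod X} {I : C}
    [Injective I] (hF : IsFreeXModOn X F I) [Mono M.str] (g : M ⟶ F) :
    IsInflationMono g ∧ LeftMinimal g ↔
      Mono (kopfMap g) ∧ Injective (cokernel F.str) ∧ LeftMinimal (kopfMap g) := by
  have := hF.mono_str
  have := hF.injective_carrier hX
  have : Injective (cokernel F.str) := Injective.of_iso hF.isoKopf inferInstance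
  rw [← isInflationMono_iff_mono_kopfMap hX g]
  refine and_congr_right fun hg => ?_
  rw [hg.leftMinimal_iff_leftMinimal_kopfMap hX, and_iff_right this]

lemma exists_isInflationMono_leftMinimal (hX : LocallyNilpotent X) (M : XMod X) [Mono M.str]
    {J : C} [Injective J] (j : cokernel M.str ⟶ J) [Mono j] (hj : LeftMinimal j) :
    ∃ (F : XMod X) (g : M ⟶ F),
      Nonempty (IsFreeXModOn X F J) ∧ IsInflationMono g ∧ LeftMinimal g := by
  obtain ⟨F, ⟨hF⟩⟩ := IsFreeXModOn.exists_of_locallyNilpotent hX J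
  have := hF.mono_str
  have := hF.injective_carrier hX
  obtain ⟨g, hg⟩ := XMod.exists_kopfMap_eq hX (j ≫ hF.isoKopf.hom)
  refine ⟨F, g, ⟨hF⟩, (isInflationMono_and_leftMinimal_iff hX hF g).2 ?_⟩
  rw [hg]
  exact ⟨inferInstance, Injective.of_iso hF.isoKopf inferInstance, hj.comp_iso hF.isoKopf⟩

end Envelopes

theorem injective_envelopes_in_monoX_general
    [PreservesFiniteLimits X] [PreservesFiniteColimits X]
    (hX : LocallyNilpotent X)
    (hXinj : ∀ I : C, Injective I → Injective (X.obj I)) :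
    (∀ (M F : XMod X) (I : C), Injective I → IsFreeXModOn X F I → Mono M.str →
      ∀ g : M ⟶ F,
        ((IsInflationMono g ∧ ∀ φ : F ⟶ F, g ≫ φ = g → IsIso φ) ↔
          (Mono (kopfMap g) ∧ Injective (cokernel F.str) ∧
            ∀ φ : cokernel F.str ⟶ cokernel F.str, kopfMap g ≫ φ = kopfMap g → IsIso φ))) ∧
    ((∀ A : C, ∃ (I : C) (f : A ⟶ I), Mono f ∧ Injective I ∧
        ∀ φ : I ⟶ I, f ≫ φ = f → IsIso φ) →
      ∀ M : XMod X, Mono M.str →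
        ∃ (J : C) (F : XMod X) (g : M ⟶ F), Injective J ∧
          Nonempty (IsFreeXModOn X F J) ∧ IsInflationMono g ∧
          ∀ φ : F ⟶ F, g ≫ φ = g → IsIso φ) := by
  have : X.PreservesInjectiveObjects := ⟨fun h => hXinj _ h⟩
  refine ⟨fun M F I _ hF _ g => isInflationMono_and_leftMinimal_iff hX hF g, fun henv M _ => ?_⟩
  obtain ⟨J, j, _, _, hj⟩ := henv (cokernel M.str)
  obtain ⟨F, g, h⟩ := exists_isInflationMono_leftMinimal hX M j hj
  exact ⟨J, F, g, inferInstance, h⟩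

/-- Let `C` be abelian with enough injectives, `X` exact, locally
nilpotent and preserving injectives, and `g : M ⟶ f₁(I)` a morphism in `Mono(X)` with `I`
injective. Then `g` is an injective envelope in the exact category `Mono(X)` (a left
minimal inflation into an injective of `Mono(X)`) if and only if
`Kopf_X(g) : Kopf_X M ⟶ I` is an injective envelope in `C`. Consequently, if `C` has
injective envelopes, then so does `Mono(X)`. -/
theorem injective_envelopes_in_monoX
    [EnoughInjectives C]
    [PreservesFiniteLimits X] [PreservesFiniteColimits X]
    (hX : LocallyNilpotent X)
    (hXinj : ∀ I : C, Injective I → Injective (X.obj I)) :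
    (∀ (M F : XMod X) (I : C), Injective I → IsFreeXModOn X F I → Mono M.str →
      ∀ g : M ⟶ F,
        ((IsInflationMono g ∧ ∀ φ : F ⟶ F, g ≫ φ = g → IsIso φ) ↔
          (Mono (kopfMap g) ∧ Injective (cokernel F.str) ∧
            ∀ φ : cokernel F.str ⟶ cokernel F.str, kopfMap g ≫ φ = kopfMap g → IsIso φ))) ∧
    ((∀ A : C, ∃ (I : C) (f : A ⟶ I), Mono f ∧ Injective I ∧
        ∀ φ : I ⟶ I, f ≫ φ = f → IsIso φ) →
      ∀ M : XMod X, Mono M.str →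
        ∃ (J : C) (F : XMod X) (g : M ⟶ F), Injective J ∧
          Nonempty (IsFreeXModOn X F J) ∧ IsInflationMono g ∧
          ∀ φ : F ⟶ F, g ≫ φ = g → IsIso φ) :=
  injective_envelopes_in_monoX_general hX hXinj
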